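/- Let I be the ideal of R = ℚ[x,y,z] generated by x²z + y²z, x³ + xy², yz³, y³z, y⁴ + xyz² − y²z², x²y² − z⁴. Then I has height 3, the minimal number of generators of I is 6, and the quotient ring R/I is a finite-dimensional ℚ-vector space. -/

import Mathlib

/-!
Write `I` for the ideal in question and `𝔪 = (x, y, z)`.

*Height and finiteness.* A prime containing `I` contains `y z³`, hence `y` or `z`, and the remaining
generators then force all three variables into it (`vars_mem_of_le`). So `𝔪` is the only prime over
`I`. Its height is at least `3` because of the chain of kernels of the substitutions killing the
first `0, 1, 2, 3` variables, and at most `3 = dim ℚ[x,y,z]`. The variables are moreover nilpotent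
modulo `I`, so `R ⧸ I` is integral and of finite type over `ℚ`, hence finite-dimensional.

*Number of generators.* The map `sep : R → ℚ⁶` reading off six suitable (combinations of)
coefficients satisfies `sep (g * h) = g(0) • sep h` for `h ∈ I`, that is, it kills `𝔪 I`, and it maps
the six generators onto a basis of `ℚ⁶` up to sign. The image under `sep` of any generating set of
`I` therefore spans `ℚ⁶`, so it has at least six elements.
-/

open MvPolynomial

/-- The height of an ideal: the infimum of the heights of prime ideals containing it. -/
noncomputable def idealHeight {R : Type*} [CommRing R] (I : Ideal R) : ℕ∞ :=
  ⨅ p ∈ {p : PrimeSpectrum R | I ≤ p.asIdeal}, Order.height p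

/-- The minimal number of generators of an ideal: the smallest cardinality of a
set of elements of the ring generating it as an ideal. -/
noncomputable def minNumGens {R : Type*} [CommRing R] (I : Ideal R) : ℕ :=
  sInf {n : ℕ | ∃ s : Finset R, s.card = n ∧ Ideal.span (s : Set R) = I}

noncomputable abbrev x : MvPolynomial (Fin 3) ℚ := X 0
noncomputable abbrev y : MvPolynomial (Fin 3) ℚ := X 1
noncomputable abbrev z : MvPolynomial (Fin 3) ℚ := X 2

/-! ### Height and finiteness -/

/-- The substitution `R → R` sending the first `k` variables to `0` and fixing the others. -/
noncomputable def killVars (k : ℕ) : MvPolynomial (Fin 3) ℚ →ₐ[ℚ] MvPolynomial (Fin 3) ℚ :=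
  aeval fun i => if (i : ℕ) < k then 0 else X i

/-- The prime ideal generated by the first `k` variables, as the kernel of `killVars k`. -/
noncomputable def varPrime (k : ℕ) : PrimeSpectrum (MvPolynomial (Fin 3) ℚ) :=
  ⟨RingHom.ker (killVars k), RingHom.ker_isPrime _⟩

lemma killVars_X (k : ℕ) (i : Fin 3) :
    killVars k (X i) = if (i : ℕ) < k then 0 else X i := by
  simp [killVars]

lemma mem_varPrime (k : ℕ) (f : MvPolynomial (Fin 3) ℚ) :
    f ∈ (varPrime k).asIdeal ↔ killVars k f = 0 := Iff.rfl

lemma varPrime_lt (k : ℕ) (hk : k < 3) : varPrime k < varPrime (k + 1) := by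
  refine lt_of_le_of_ne ?_ ?_
  · have h : (killVars (k + 1)).comp (killVars k) = killVars (k + 1) := by
      ext i : 1
      simp only [AlgHom.comp_apply, killVars_X]
      split_ifs
      · simp
      · omega
      · simp [killVars_X]; omega
      · simp [killVars_X]; omega
    intro f hf
    have hf' : killVars k f = 0 := hf
    change killVars (k + 1) f = 0
    rw [← h, AlgHom.comp_apply, hf', map_zero]
  · intro h
    -- the variable of index `k` lies in the larger prime only
    have h1 : (X ⟨k, hk⟩ : MvPolynomial (Fin 3) ℚ) ∈ (varPrime (k + 1)).asIdeal := by
      simp [mem_varPrime, killVars_X]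
    rw [← h] at h1
    simp [mem_varPrime, killVars_X] at h1

lemma three_le_height_varPrime : 3 ≤ Order.height (varPrime 3) := by
  have h0 := Order.height_add_one_le (varPrime_lt 0 (by norm_num))
  have h1 := Order.height_add_one_le (varPrime_lt 1 (by norm_num))
  have h2 := Order.height_add_one_le (varPrime_lt 2 (by norm_num))
  calc (3 : ℕ∞) = 0 + 1 + 1 + 1 := by norm_num
    _ ≤ Order.height (varPrime 0) + 1 + 1 + 1 := by gcongr; exact zero_le
    _ ≤ Order.height (varPrime 1) + 1 + 1 := by gcongr
    _ ≤ Order.height (varPrime 2) + 1 := by gcongr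
    _ ≤ Order.height (varPrime 3) := h2

lemma height_le_three (p : PrimeSpectrum (MvPolynomial (Fin 3) ℚ)) : Order.height p ≤ 3 := by
  have h := Order.height_le_krullDim p
  have h2 : ringKrullDim (MvPolynomial (Fin 3) ℚ) = 3 := by
    rw [MvPolynomial.ringKrullDim_of_isNoetherianRing, ringKrullDim_eq_zero_of_field]
    simp
  have h3 : ((Order.height p : ℕ∞) : WithBot ℕ∞) ≤ ((3 : ℕ∞) : WithBot ℕ∞) := by
    refine h.trans ?_
    change ringKrullDim (MvPolynomial (Fin 3) ℚ) ≤ _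
    rw [h2]; rfl
  exact_mod_cast h3

/-- A prime containing all the variables contains `(x, y, z)`. -/
lemma varPrime_le (p : PrimeSpectrum (MvPolynomial (Fin 3) ℚ))
    (hp : ∀ i, (X i : MvPolynomial (Fin 3) ℚ) ∈ p.asIdeal) : varPrime 3 ≤ p := by
  intro f hf
  have hf' : killVars 3 f = 0 := hf
  have h : (Ideal.Quotient.mkₐ ℚ p.asIdeal).comp (killVars 3) =
      Ideal.Quotient.mkₐ ℚ p.asIdeal := by
    ext i : 1
    have := Ideal.Quotient.eq_zero_iff_mem.mpr (hp i)
    simp [killVars_X, this]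
  have h2 := DFunLike.congr_fun h f
  rw [AlgHom.comp_apply, hf', map_zero] at h2
  exact Ideal.Quotient.eq_zero_iff_mem.mp h2.symm

/-- The ideal under study. -/
noncomputable def theIdeal : Ideal (MvPolynomial (Fin 3) ℚ) :=
  Ideal.span {x^2*z + y^2*z, x^3 + x*y^2, y*z^3, y^3*z, y^4 + x*y*z^2 - y^2*z^2, x^2*y^2 - z^4}

lemma theIdeal_le_iff (J : Ideal (MvPolynomial (Fin 3) ℚ)) : theIdeal ≤ J ↔
    x^2*z + y^2*z ∈ J ∧ x^3 + x*y^2 ∈ J ∧ y*z^3 ∈ J ∧ y^3*z ∈ J ∧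
      y^4 + x*y*z^2 - y^2*z^2 ∈ J ∧ x^2*y^2 - z^4 ∈ J := by
  simp only [theIdeal, Ideal.span_le, Set.insert_subset_iff, Set.singleton_subset_iff,
    SetLike.mem_coe]

lemma vars_mem_of_le (p : Ideal (MvPolynomial (Fin 3) ℚ)) [hp : p.IsPrime] (h : theIdeal ≤ p)
    (i : Fin 3) : X i ∈ p := by
  obtain ⟨-, hb, hc, -, he, hf⟩ := (theIdeal_le_iff p).mp h
  have hy : y ∈ p := by
    rcases hp.mem_or_mem hc with h | h
    · exact h
    · have hz := hp.mem_of_pow_mem _ h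
      refine hp.mem_of_pow_mem 4 ?_
      have : y^4 = (y^4 + x*y*z^2 - y^2*z^2) + (-(x*y*z) + y^2*z) * z := by ring
      rw [this]
      exact add_mem he (Ideal.mul_mem_left _ _ hz)
  have hz : z ∈ p := by
    refine hp.mem_of_pow_mem 4 ?_
    have : z^4 = -(x^2*y^2 - z^4) + (x^2*y) * y := by ring
    rw [this]
    exact add_mem (neg_mem hf) (Ideal.mul_mem_left _ _ hy)
  have hx : x ∈ p := by
    refine hp.mem_of_pow_mem 3 ?_
    have : x^3 = (x^3 + x*y^2) + (-(x*y)) * y := by ring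
    rw [this]
    exact add_mem hb (Ideal.mul_mem_left _ _ hy)
  fin_cases i
  · exact hx
  · exact hy
  · exact hz

lemma theIdeal_le_varPrime : theIdeal ≤ (varPrime 3).asIdeal := by
  rw [theIdeal_le_iff]
  simp [mem_varPrime, killVars_X]

lemma idealHeight_theIdeal : idealHeight theIdeal = 3 := by
  apply le_antisymm
  · exact (iInf₂_le (varPrime 3) theIdeal_le_varPrime).trans (height_le_three _)
  · refine le_iInf₂ fun p hp => ?_
    have := p.isPrime
    exact three_le_height_varPrime.trans
      (Order.height_mono (varPrime_le p (vars_mem_of_le p.asIdeal hp)))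

lemma finite_quotient : FiniteDimensional ℚ (MvPolynomial (Fin 3) ℚ ⧸ theIdeal) := by
  have hint : ∀ i, IsIntegral ℚ (Ideal.Quotient.mkₐ ℚ theIdeal (X i)) := by
    intro i
    have : (X i : MvPolynomial (Fin 3) ℚ) ∈ theIdeal.radical := by
      rw [Ideal.radical_eq_sInf, Submodule.mem_sInf]
      rintro J ⟨hJ, hJp⟩
      exact vars_mem_of_le J hJ i
    obtain ⟨n, hn⟩ := this
    -- a nilpotent element is a root of `T ^ (n + 1)`
    refine IsIntegral.of_pow (n := n + 1) (Nat.succ_pos _) ?_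
    rw [← map_pow, pow_succ]
    have h0 : Ideal.Quotient.mkₐ ℚ theIdeal (X i ^ n * X i) = 0 :=
      Ideal.Quotient.eq_zero_iff_mem.mpr (Ideal.mul_mem_right _ _ hn)
    rw [h0]
    exact isIntegral_zero
  have : Algebra.IsIntegral ℚ (MvPolynomial (Fin 3) ℚ ⧸ theIdeal) := by
    refine ⟨fun q => ?_⟩
    obtain ⟨f, rfl⟩ := Ideal.Quotient.mkₐ_surjective ℚ theIdeal q
    induction f using MvPolynomial.induction_on with
    | C a => exact isIntegral_algebraMap (R := ℚ) (x := a)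
    | add f g hf hg => rw [map_add]; exact hf.add hg
    | mul_X f i hf => rw [map_mul]; exact hf.mul (hint i)
  exact Algebra.IsIntegral.finite

/-! ### Number of generators -/

/-- The exponent vector of `x ^ a * y ^ b * z ^ c`. -/
noncomputable def expo (a b c : ℕ) : Fin 3 →₀ ℕ := Finsupp.equivFunOnFinite.symm ![a, b, c]

lemma monomial_expo (i j k : ℕ) :
    (monomial (expo i j k) 1 : MvPolynomial (Fin 3) ℚ) = x ^ i * y ^ j * z ^ k := by
  rw [monomial_eq, Finsupp.prod_fintype _ _ (by simp)]
  simp [Fin.prod_univ_three, expo]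

lemma coeff_mul_mon (a b c i j k : ℕ) (g : MvPolynomial (Fin 3) ℚ) :
    coeff (expo a b c) (g * (x ^ i * y ^ j * z ^ k)) =
      if i ≤ a ∧ j ≤ b ∧ k ≤ c then coeff (expo (a - i) (b - j) (c - k)) g else 0 := by
  have hle : expo i j k ≤ expo a b c ↔ i ≤ a ∧ j ≤ b ∧ k ≤ c := by
    simp [Finsupp.le_def, Fin.forall_fin_succ, expo]
  have hsub : expo a b c - expo i j k = expo (a - i) (b - j) (c - k) := by
    ext l
    fin_cases l <;> simp [expo]
  rw [← monomial_expo, coeff_mul_monomial', hsub, mul_one]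
  simp only [hle]

/-- Six coefficient functionals separating the generators: the coefficients of `x²z`, `x³`, `yz³`,
`y⁴`, `z⁴`, and the difference of those of `y³z` and `x²yz`, which vanishes on `y(x²z + y²z)`. -/
noncomputable def sep : MvPolynomial (Fin 3) ℚ →ₗ[ℚ] (Fin 6 → ℚ) :=
  LinearMap.pi ![lcoeff ℚ (expo 2 0 1), lcoeff ℚ (expo 3 0 0), lcoeff ℚ (expo 0 1 3),
    lcoeff ℚ (expo 0 3 1) - lcoeff ℚ (expo 2 1 1), lcoeff ℚ (expo 0 4 0), lcoeff ℚ (expo 0 0 4)]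

lemma sep_eq (g : MvPolynomial (Fin 3) ℚ) : sep g =
    ![coeff (expo 2 0 1) g, coeff (expo 3 0 0) g, coeff (expo 0 1 3) g,
      coeff (expo 0 3 1) g - coeff (expo 2 1 1) g, coeff (expo 0 4 0) g, coeff (expo 0 0 4) g] := by
  ext i
  fin_cases i <;> simp [sep, lcoeff]

/-- The generators of `theIdeal`, in the order of the coordinates of `sep`. -/
noncomputable def gen : Fin 6 → MvPolynomial (Fin 3) ℚ :=
  ![x^2*z + y^2*z, x^3 + x*y^2, y*z^3, y^3*z, y^4 + x*y*z^2 - y^2*z^2, x^2*y^2 - z^4]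

/-- The value `sep (gen i)`: a signed standard basis vector. -/
def signedBasis (i : Fin 6) : Fin 6 → ℚ := Pi.single i (if i = 5 then -1 else 1)

lemma sep_mul_gen (g : MvPolynomial (Fin 3) ℚ) (i : Fin 6) :
    sep (g * gen i) = coeff (expo 0 0 0) g • signedBasis i := by
  have h0 : g * gen 0 = g * (x^2*y^0*z^1) + g * (x^0*y^2*z^1) := by simp [gen]; ring
  have h1 : g * gen 1 = g * (x^3*y^0*z^0) + g * (x^1*y^2*z^0) := by simp [gen]; ring
  have h2 : g * gen 2 = g * (x^0*y^1*z^3) := by simp [gen]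
  have h3 : g * gen 3 = g * (x^0*y^3*z^1) := by simp [gen]
  have h4 : g * gen 4 = g * (x^0*y^4*z^0) + g * (x^1*y^1*z^2) - g * (x^0*y^2*z^2) := by
    simp [gen]; ring
  have h5 : g * gen 5 = g * (x^2*y^2*z^0) - g * (x^0*y^0*z^4) := by simp [gen]; ring
  have key : ∀ j, sep (g * gen i) j = (coeff (expo 0 0 0) g • signedBasis i) j := by
    fin_cases i
    · change ∀ j, sep (g * gen 0) j = _
      rw [h0, sep_eq]; simp only [coeff_add, coeff_sub, coeff_mul_mon]
      intro j; fin_cases j <;> simp [signedBasis]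
    · change ∀ j, sep (g * gen 1) j = _
      rw [h1, sep_eq]; simp only [coeff_add, coeff_sub, coeff_mul_mon]
      intro j; fin_cases j <;> simp [signedBasis]
    · change ∀ j, sep (g * gen 2) j = _
      rw [h2, sep_eq]; simp only [coeff_add, coeff_sub, coeff_mul_mon]
      intro j; fin_cases j <;> simp [signedBasis]
    · change ∀ j, sep (g * gen 3) j = _
      rw [h3, sep_eq]; simp only [coeff_add, coeff_sub, coeff_mul_mon]
      intro j; fin_cases j <;> simp [signedBasis]
    · change ∀ j, sep (g * gen 4) j = _
      rw [h4, sep_eq]; simp only [coeff_add, coeff_sub, coeff_mul_mon]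
      intro j; fin_cases j <;> simp [signedBasis]
    · change ∀ j, sep (g * gen 5) j = _
      rw [h5, sep_eq]; simp only [coeff_add, coeff_sub, coeff_mul_mon]
      intro j; fin_cases j <;> simp [signedBasis]
  exact funext key

lemma expo_zero : expo 0 0 0 = 0 := by
  ext i
  fin_cases i <;> simp [expo]

lemma sep_gen (i : Fin 6) : sep (gen i) = signedBasis i := by
  have := sep_mul_gen 1 i
  rw [one_mul, expo_zero] at this
  simpa using this

lemma range_gen : Set.range gen =
    {x^2*z + y^2*z, x^3 + x*y^2, y*z^3, y^3*z, y^4 + x*y*z^2 - y^2*z^2, x^2*y^2 - z^4} := by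
  simp only [gen, Matrix.range_cons, Matrix.range_empty, Set.union_empty, Set.singleton_union]

lemma theIdeal_eq : theIdeal = Ideal.span (Set.range gen) := by
  rw [range_gen, theIdeal]

/-- On `theIdeal`, the map `sep` is semilinear along evaluation at the origin. -/
lemma sep_mul (h : MvPolynomial (Fin 3) ℚ) (hh : h ∈ theIdeal) :
    ∀ g, sep (g * h) = constantCoeff g • sep h := by
  rw [theIdeal_eq] at hh
  induction hh using Submodule.span_induction with
  | mem h hh =>
    obtain ⟨i, rfl⟩ := hh
    intro g
    rw [sep_mul_gen, sep_gen, expo_zero, constantCoeff_eq]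
  | zero => simp
  | add h k _ _ ih ik => intro g; rw [mul_add, map_add, map_add, ih, ik, smul_add]
  | smul r h _ ih =>
    intro g
    rw [smul_eq_mul, ← mul_assoc, ih, ih, map_mul, mul_smul]

lemma six_le_card (s : Finset (MvPolynomial (Fin 3) ℚ))
    (hs : Ideal.span (s : Set (MvPolynomial (Fin 3) ℚ)) = theIdeal) : 6 ≤ s.card := by
  classical
  have hmem : ∀ h ∈ theIdeal, sep h ∈ Submodule.span ℚ ((s.image sep : Finset _) : Set _) := by
    intro h hh
    rw [← hs] at hh
    induction hh using Submodule.span_induction with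
    | mem h hh =>
      exact Submodule.subset_span (Finset.mem_coe.mpr (Finset.mem_image_of_mem _ hh))
    | zero => simp
    | add h k _ _ ih ik => rw [map_add]; exact add_mem ih ik
    | smul r h hh ih =>
      rw [smul_eq_mul, sep_mul h (hs ▸ hh)]
      exact Submodule.smul_mem _ _ ih
  have htop : Submodule.span ℚ ((s.image sep : Finset _) : Set (Fin 6 → ℚ)) = ⊤ := by
    rw [eq_top_iff, ← (Pi.basisFun ℚ (Fin 6)).span_eq, Submodule.span_le]
    rintro _ ⟨i, rfl⟩
    have hi := hmem (gen i) (theIdeal_eq ▸ Ideal.subset_span ⟨i, rfl⟩)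
    have : Pi.basisFun ℚ (Fin 6) i = (if i = 5 then (-1 : ℚ) else 1) • sep (gen i) := by
      rw [sep_gen, signedBasis, ← Pi.single_smul, Pi.basisFun_apply]
      congr 1
      split_ifs <;> norm_num
    rw [this]
    exact Submodule.smul_mem _ _ hi
  have hcard := finrank_span_finset_le_card (R := ℚ) (s.image sep)
  rw [Set.finrank, htop, finrank_top, Module.finrank_fin_fun] at hcard
  exact hcard.trans Finset.card_image_le

lemma minNumGens_theIdeal : minNumGens theIdeal = 6 := by
  classical
  have hinj : Function.Injective gen := by
    intro i j hij
    have h : sep (gen i) i = sep (gen j) i := by rw [hij]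
    rw [sep_gen, sep_gen, signedBasis, signedBasis, Pi.single_eq_same] at h
    by_contra hne
    rw [Pi.single_eq_of_ne hne] at h
    split_ifs at h <;> norm_num at h
  have h6 : 6 ∈ {n : ℕ | ∃ s : Finset (MvPolynomial (Fin 3) ℚ), s.card = n ∧
      Ideal.span (s : Set (MvPolynomial (Fin 3) ℚ)) = theIdeal} := by
    refine ⟨Finset.univ.image gen, ?_, ?_⟩
    · rw [Finset.card_image_of_injective _ hinj]; simp
    · rw [theIdeal_eq]; simp
  apply le_antisymm
  · exact Nat.sInf_le h6
  · refine le_csInf ⟨6, h6⟩ ?_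
    rintro n ⟨s, rfl, hs⟩
    exact six_le_card s hs

theorem stmt_8 (I : Ideal (MvPolynomial (Fin 3) ℚ))
    (hI : I = Ideal.span {x^2*z + y^2*z, x^3 + x*y^2, y*z^3, y^3*z, y^4 + x*y*z^2 - y^2*z^2, x^2*y^2 - z^4}) :
    idealHeight I = 3 ∧ minNumGens I = 6 ∧
    FiniteDimensional ℚ (MvPolynomial (Fin 3) ℚ ⧸ I) := by
  have h : I = theIdeal := hI
  subst h
  exact ⟨idealHeight_theIdeal, minNumGens_theIdeal, finite_quotient⟩
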